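/- Let 0<p<1, let (x_n)_{n∈ℕ} together with (x_n*)_{n∈ℕ} be a quasi-greedy basis of ℓ_p, and set q := (1−p+p²)/(p²−p³). Then there is a constant c>0 such that φ_l(m) ≥ c · m^{1/p} / (1+log m)^{q} for every m ≥ 1. -/

import Mathlib

open scoped BigOperators

/-- For `0 < p < 1`, membership in `ℓ_p`: the sequence `(|f j|^p)_j` is summable. -/
def MemLpSeq (p : ℝ) (f : ℕ → ℝ) : Prop := Summable fun j => |f j| ^ p

/-- The `p`-norm `‖f‖_p = (∑_j |f j|^p)^(1/p)`. -/
noncomputable def pNorm (p : ℝ) (f : ℕ → ℝ) : ℝ := (∑' j, |f j| ^ p) ^ (1 / p)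

/-- `A` is a greedy set for the coefficient sequence `coef`. -/
def GreedySet (coef : ℕ → ℝ) (A : Finset ℕ) : Prop :=
  ∀ n ∈ A, ∀ k ∉ A, |coef k| ≤ |coef n|

/-- `(x_n)` together with bounded linear functionals `(x_n^*)` is a basis of `ℓ_p`. -/
structure IsLpBasis (p : ℝ) (x : ℕ → ℕ → ℝ) (xs : ℕ → (ℕ → ℝ) → ℝ) : Prop where
  mem : ∀ n, MemLpSeq p (x n)
  map_add : ∀ n f g, MemLpSeq p f → MemLpSeq p g → xs n (f + g) = xs n f + xs n g
  map_smul : ∀ n (c : ℝ) (f : ℕ → ℝ), MemLpSeq p f → xs n (fun j => c * f j) = c * xs n f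
  bdd : ∃ b : ℝ, ∀ n f, MemLpSeq p f → |xs n f| ≤ b * pNorm p f
  biorth : ∀ m n, xs m (x n) = if m = n then (1 : ℝ) else 0
  dense : ∀ f, MemLpSeq p f → ∀ ε > 0, ∃ (A : Finset ℕ) (c : ℕ → ℝ),
    pNorm p (fun j => f j - ∑ n ∈ A, c n * x n j) < ε
  norm_lb : ∃ c > 0, ∀ n, c ≤ pNorm p (x n)
  norm_ub : ∃ C : ℝ, ∀ n, pNorm p (x n) ≤ C

/-- The basis is quasi-greedy: greedy projections are uniformly bounded. -/
def QuasiGreedy (p : ℝ) (x : ℕ → ℕ → ℝ) (xs : ℕ → (ℕ → ℝ) → ℝ) : Prop :=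
  ∃ C ≥ (1 : ℝ), ∀ f, MemLpSeq p f → ∀ A : Finset ℕ,
    GreedySet (fun n => xs n f) A →
    pNorm p (fun j => ∑ n ∈ A, xs n f * x n j) ≤ C * pNorm p f

/-!
The estimate holds without the logarithm. Since `∑ j, x n j * xs n (e j) = 1`, where the `p`-th
powers of the terms have bounded sum and `p < 1`, some term is at least a fixed `δ > 0`, which links
each `n` to a coordinate `j`. Only boundedly many `n` are linked to the same `j`: with `b` a common
bound for all `|x n j|` and `|xs n (e j)|`, the linked coefficients `xs n (e j)` of the unit vector
`e j` have modulus between `δ / b` and `b`, so they fall into boundedly many thin slices of modulus.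
On one slice the projection of `e j` is a difference of two greedy projections, hence bounded; as
its coefficients are nearly constant in modulus, replacing them by their signs costs only a constant
factor, and the value of the resulting vector at `j` bounds the number of terms.

Finally, quasi-greediness bounds `∑ n ∈ B, x n` by `∑ n ∈ A, x n` for all `B ⊆ A`. Averaging
`|∑ n ∈ B, x n j| ^ p` over `B` at each linked coordinate `j` gives at least a constant. There are
at least a fixed multiple of `A.card` linked coordinates, so summing over them bounds `A.card` by a
multiple of the `p`-th power of the norm of `∑ n ∈ A, x n`.
-/

section RealInequalities

variable {p : ℝ}

lemma abs_add_rpow_le (hp0 : 0 ≤ p) (hp1 : p ≤ 1) (a b : ℝ) :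
    |a + b| ^ p ≤ |a| ^ p + |b| ^ p :=
  (Real.rpow_le_rpow (abs_nonneg _) (abs_add_le a b) hp0).trans
    (Real.rpow_add_le_add_rpow (abs_nonneg _) (abs_nonneg _) hp0 hp1)

lemma le_rpow_inv_mul_of_rpow_le {a b K : ℝ} (hp : 0 < p) (ha : 0 ≤ a) (hb : 0 ≤ b) (hK : 0 ≤ K)
    (h : a ^ p ≤ K * b ^ p) : a ≤ K ^ p⁻¹ * b := by
  refine (Real.rpow_le_rpow_iff ha (by positivity) hp).1 ?_
  rwa [Real.mul_rpow (by positivity) hb, Real.rpow_inv_rpow hK hp.ne']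

lemma le_rpow_one_sub_mul_rpow {u δ v : ℝ} (hp0 : 0 ≤ p) (hp1 : p ≤ 1) (hδ : 0 ≤ δ) (hv : 0 ≤ v)
    (huδ : u ≤ δ) (huv : u ≤ v) : u ≤ δ ^ (1 - p) * v ^ p := by
  rcases le_or_gt u 0 with hu | hu
  · exact hu.trans (by positivity)
  · calc u = u ^ (1 - p) * u ^ p := by rw [← Real.rpow_add hu, sub_add_cancel, Real.rpow_one]
      _ ≤ δ ^ (1 - p) * v ^ p := by gcongr

lemma two_pow_card_mul_abs_rpow_le {ι : Type*} (hp0 : 0 ≤ p) (hp1 : p ≤ 1) (v : ι → ℝ)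
    {A : Finset ι} {n : ι} (hn : n ∈ A) :
    2 ^ A.card * |v n| ^ p ≤ 2 * ∑ B ∈ A.powerset, |∑ k ∈ B, v k| ^ p := by
  classical
  have hpair : ∀ B ∈ (A.erase n).powerset,
      |v n| ^ p ≤ |∑ k ∈ B, v k| ^ p + |∑ k ∈ insert n B, v k| ^ p := fun B hB => by
    have hnB : n ∉ B := fun h => Finset.notMem_erase n A (Finset.mem_powerset.1 hB h)
    have h := abs_add_rpow_le hp0 hp1 (-∑ k ∈ B, v k) (∑ k ∈ insert n B, v k)
    rwa [Finset.sum_insert hnB, neg_add_cancel_comm_assoc, abs_neg, ← Finset.sum_insert hnB] at h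
  have hsum := Finset.card_nsmul_le_sum _ _ _ hpair
  rw [Finset.sum_add_distrib, ← Finset.sum_powerset_insert (Finset.notMem_erase n A),
    Finset.insert_erase hn, Finset.card_powerset, nsmul_eq_mul, Nat.cast_pow, Nat.cast_ofNat]
    at hsum
  rw [← Finset.card_erase_add_one hn, pow_succ]
  linarith

lemma abs_coe_sign {a : ℝ} (ha : a ≠ 0) : |(SignType.sign a : ℝ)| = 1 := by
  rcases ha.lt_or_gt with h | h <;> simp [h]

lemma div_le_abs_of_le_mul {a b c δ : ℝ} (hb : 0 < b) (h : δ ≤ a * c) (hc : |c| ≤ b) :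
    δ / b ≤ |a| := by
  rw [div_le_iff₀ hb]
  calc δ ≤ |a| * |c| := h.trans ((le_abs_self _).trans_eq (abs_mul a c))
    _ ≤ |a| * b := by gcongr

lemma div_le_sign_mul_of_le_mul {a b c δ : ℝ} (hb : 0 < b) (hδ : 0 < δ) (h : δ ≤ a * c)
    (hc : |c| ≤ b) : δ / b ≤ (SignType.sign c : ℝ) * a := by
  have hsign : a * c = (SignType.sign c : ℝ) * a * |c| := by
    rw [mul_right_comm, sign_mul_abs, mul_comm]
  have hpos : 0 < (SignType.sign c : ℝ) * a :=
    pos_of_mul_pos_left (hsign ▸ hδ.trans_le h) (abs_nonneg c)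
  rw [div_le_iff₀ hb]
  calc δ ≤ (SignType.sign c : ℝ) * a * |c| := hsign ▸ h
    _ ≤ (SignType.sign c : ℝ) * a * b := by gcongr

lemma one_le_one_add_log_rpow {y q : ℝ} (hy : 1 ≤ y) (hq : 0 ≤ q) :
    1 ≤ (1 + Real.log y) ^ q :=
  Real.one_le_rpow (le_add_of_nonneg_right (Real.log_nonneg hy)) hq

end RealInequalities

lemma card_le_of_forall_card_slice_le {ι : Type*} {A : Finset ι} {g : ι → ℝ} {a b η : ℝ} {k : ℕ}
    (hη : 0 < η) (hg : ∀ n ∈ A, a ≤ g n ∧ g n ≤ b)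
    (hk : ∀ t ≥ a, ∀ B ⊆ A, (∀ n ∈ B, t ≤ g n ∧ g n < t + η) → B.card ≤ k) :
    A.card ≤ k * (⌊(b - a) / η⌋₊ + 1) := by
  rw [← Finset.card_range (⌊(b - a) / η⌋₊ + 1)]
  refine Finset.card_le_mul_card_image_of_maps_to (f := fun n => ⌊(g n - a) / η⌋₊)
    (fun n hn => ?_) k fun l _ => ?_
  · have hgb : g n ≤ b := (hg n hn).2
    exact Finset.mem_coe.2 (Finset.mem_range_succ_iff.2 (by gcongr))
  · refine hk (a + l * η) (le_add_of_nonneg_right (by positivity)) _ (Finset.filter_subset _ _)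
      fun n hn => ?_
    obtain ⟨hnA, hl⟩ := Finset.mem_filter.1 hn
    have hga : 0 ≤ (g n - a) / η := div_nonneg (sub_nonneg.2 (hg n hnA).1) hη.le
    obtain ⟨hlower, hupper⟩ := (Nat.floor_eq_iff hga).1 hl
    rw [le_div_iff₀ hη] at hlower
    rw [div_lt_iff₀ hη] at hupper
    constructor <;> linarith

section PNorm

variable {ι : Type*} {p : ℝ} {f g : ℕ → ℝ}

lemma pNorm_nonneg (p : ℝ) (f : ℕ → ℝ) : 0 ≤ pNorm p f :=
  Real.rpow_nonneg (tsum_nonneg fun _ => Real.rpow_nonneg (abs_nonneg _) _) _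

lemma pNorm_rpow (hp : p ≠ 0) (f : ℕ → ℝ) : pNorm p f ^ p = ∑' j, |f j| ^ p := by
  rw [pNorm, one_div,
    Real.rpow_inv_rpow (tsum_nonneg fun _ => Real.rpow_nonneg (abs_nonneg _) _) hp]

lemma MemLpSeq.zero (hp : p ≠ 0) : MemLpSeq p 0 := by
  simpa only [MemLpSeq, Pi.zero_apply, abs_zero, Real.zero_rpow hp] using summable_zero

lemma MemLpSeq.add (hp0 : 0 ≤ p) (hp1 : p ≤ 1) (hf : MemLpSeq p f) (hg : MemLpSeq p g) :
    MemLpSeq p (f + g) :=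
  Summable.of_nonneg_of_le (fun _ => Real.rpow_nonneg (abs_nonneg _) _)
    (fun j => abs_add_rpow_le hp0 hp1 (f j) (g j)) (Summable.add hf hg)

lemma MemLpSeq.smul (c : ℝ) (hf : MemLpSeq p f) : MemLpSeq p (c • f) := by
  simpa only [MemLpSeq, Pi.smul_apply, smul_eq_mul, abs_mul,
    Real.mul_rpow (abs_nonneg _) (abs_nonneg _)] using Summable.mul_left (|c| ^ p) hf

lemma MemLpSeq.sub (hp0 : 0 ≤ p) (hp1 : p ≤ 1) (hf : MemLpSeq p f) (hg : MemLpSeq p g) :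
    MemLpSeq p (f - g) := by
  simpa only [neg_one_smul, ← sub_eq_add_neg] using hf.add hp0 hp1 (hg.smul (-1))

lemma MemLpSeq.sum (hp0 : 0 < p) (hp1 : p ≤ 1) {y : ι → ℕ → ℝ} (hy : ∀ i, MemLpSeq p (y i))
    (s : Finset ι) : MemLpSeq p (∑ i ∈ s, y i) :=
  Finset.sum_induction _ (MemLpSeq p) (fun _ _ hf hg => hf.add hp0.le hp1 hg)
    (MemLpSeq.zero hp0.ne') fun i _ => hy i

lemma MemLpSeq.sum_smul (hp0 : 0 < p) (hp1 : p ≤ 1) {y : ι → ℕ → ℝ} (hy : ∀ i, MemLpSeq p (y i))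
    (s : Finset ι) (a : ι → ℝ) : MemLpSeq p (∑ i ∈ s, a i • y i) :=
  .sum hp0 hp1 (fun i => (hy i).smul (a i)) s

lemma pNorm_add_rpow_le (hp0 : 0 < p) (hp1 : p ≤ 1) (hf : MemLpSeq p f) (hg : MemLpSeq p g) :
    pNorm p (f + g) ^ p ≤ pNorm p f ^ p + pNorm p g ^ p := by
  simp only [pNorm_rpow hp0.ne']
  rw [← Summable.tsum_add hf hg]
  exact Summable.tsum_le_tsum (fun j => abs_add_rpow_le hp0.le hp1 (f j) (g j))
    (hf.add hp0.le hp1 hg) (Summable.add hf hg)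

lemma pNorm_smul (hp : p ≠ 0) (c : ℝ) (f : ℕ → ℝ) : pNorm p (c • f) = |c| * pNorm p f := by
  simp only [pNorm, Pi.smul_apply, smul_eq_mul, abs_mul,
    Real.mul_rpow (abs_nonneg _) (abs_nonneg _), tsum_mul_left]
  rw [Real.mul_rpow (by positivity) (tsum_nonneg fun _ => by positivity), one_div,
    Real.rpow_rpow_inv (abs_nonneg c) hp]

lemma pNorm_sub_rpow_le (hp0 : 0 < p) (hp1 : p ≤ 1) (hf : MemLpSeq p f) (hg : MemLpSeq p g) :
    pNorm p (f - g) ^ p ≤ pNorm p f ^ p + pNorm p g ^ p := by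
  have h := pNorm_add_rpow_le hp0 hp1 hf (hg.smul (-1))
  rwa [pNorm_smul hp0.ne', abs_neg, abs_one, one_mul, neg_one_smul, ← sub_eq_add_neg] at h

lemma pNorm_sum_smul_rpow_le (hp0 : 0 < p) (hp1 : p ≤ 1) {y : ι → ℕ → ℝ}
    (hy : ∀ i, MemLpSeq p (y i)) (s : Finset ι) (a : ι → ℝ) :
    pNorm p (∑ i ∈ s, a i • y i) ^ p ≤ ∑ i ∈ s, (|a i| * pNorm p (y i)) ^ p := by
  have hzero : pNorm p 0 ^ p = 0 := by simp [pNorm_rpow hp0.ne', Real.zero_rpow hp0.ne']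
  refine (Finset.le_sum_of_subadditive_on_pred (fun f => pNorm p f ^ p) (MemLpSeq p) hzero.le
    (fun _ _ => pNorm_add_rpow_le hp0 hp1) (fun _ _ hf hg => hf.add hp0.le hp1 hg) _
    fun i _ => (hy i).smul (a i)).trans_eq ?_
  simp only [pNorm_smul hp0.ne']

lemma MemLpSeq.sum_rpow_le (hp : p ≠ 0) (hf : MemLpSeq p f) (s : Finset ℕ) :
    ∑ j ∈ s, |f j| ^ p ≤ pNorm p f ^ p := by
  rw [pNorm_rpow hp]
  exact Summable.sum_le_tsum s (fun _ _ => Real.rpow_nonneg (abs_nonneg _) _) hf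

lemma MemLpSeq.abs_apply_le_pNorm (hp : 0 < p) (hf : MemLpSeq p f) (j : ℕ) : |f j| ≤ pNorm p f := by
  have h := hf.sum_rpow_le hp.ne' {j}
  rw [Finset.sum_singleton] at h
  exact (Real.rpow_le_rpow_iff (abs_nonneg _) (pNorm_nonneg p f) hp).1 h

lemma hasSum_abs_single_rpow (hp : p ≠ 0) (j : ℕ) :
    HasSum (fun i => |Pi.single (M := fun _ => ℝ) j 1 i| ^ p) 1 := by
  convert! hasSum_ite_eq j (1 : ℝ) using 2 with i
  by_cases h : i = j <;> simp [h, Real.zero_rpow hp]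

lemma memLpSeq_single (hp : p ≠ 0) (j : ℕ) : MemLpSeq p (Pi.single j 1) :=
  (hasSum_abs_single_rpow hp j).summable

lemma pNorm_single (hp : p ≠ 0) (j : ℕ) : pNorm p (Pi.single j 1) = 1 := by
  rw [pNorm, (hasSum_abs_single_rpow hp j).tsum_eq, Real.one_rpow]

lemma tendsto_pNorm_sub_sum_single (hp : 0 < p) (f : ℕ → ℝ) :
    Filter.Tendsto (fun J : Finset ℕ => pNorm p (f - ∑ j ∈ J, f j • Pi.single j 1))
      Filter.atTop (nhds 0) := by
  have htail (J : Finset ℕ) : ∑' j, |(f - ∑ i ∈ J, f i • Pi.single i 1 : ℕ → ℝ) j| ^ p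
      = ∑' j : {j // j ∉ J}, |f j| ^ p := by
    refine Eq.trans (tsum_congr fun j => ?_) (tsum_subtype {j | j ∉ J} fun j => |f j| ^ p).symm
    by_cases hj : j ∈ J <;> simp [hj, Pi.single_apply, Real.zero_rpow hp.ne']
  simpa only [pNorm, htail, Real.zero_rpow (one_div_pos.2 hp).ne'] using
    (tendsto_tsum_compl_atTop_zero fun j => |f j| ^ p).rpow_const
      (.inr (one_div_pos.2 hp).le)

lemma exists_two_rpow_mul_pNorm_sum_smul_rpow_le (hp0 : 0 < p) (hp1 : p ≤ 1) {y : ι → ℕ → ℝ}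
    (hy : ∀ i, MemLpSeq p (y i)) {G : Finset ι} {D : ℝ}
    (hD : ∀ H ⊆ G, pNorm p (∑ i ∈ H, y i) ^ p ≤ D) {θ : ι → ℝ} (hθ : ∀ i ∈ G, θ i ∈ Set.Icc 0 1) :
    ∃ θ' : ι → ℝ, (∀ i ∈ G, θ' i ∈ Set.Icc 0 1) ∧
      2 ^ p * pNorm p (∑ i ∈ G, θ i • y i) ^ p ≤ D + pNorm p (∑ i ∈ G, θ' i • y i) ^ p := by
  classical
  -- `H` collects the indices whose first binary digit is `1`; that digit is stripped from each.
  set H := G.filter fun i => 1 / 2 ≤ θ i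
  set θ' : ι → ℝ := fun i => if 1 / 2 ≤ θ i then 2 * θ i - 1 else 2 * θ i
  have hdigit : (2 : ℝ) • ∑ i ∈ G, θ i • y i
      = ∑ i ∈ H, y i + ∑ i ∈ G, θ' i • y i := by
    rw [Finset.smul_sum, Finset.sum_filter, ← Finset.sum_add_distrib]
    refine Finset.sum_congr rfl fun i _ => ?_
    simp only [θ']
    split_ifs <;> module
  refine ⟨θ', fun i hi => ?_, ?_⟩
  · obtain ⟨h0, h1⟩ := hθ i hi
    simp only [θ']
    split_ifs <;> constructor <;> linarith
  · calc 2 ^ p * pNorm p (∑ i ∈ G, θ i • y i) ^ p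
        = pNorm p ((2 : ℝ) • ∑ i ∈ G, θ i • y i) ^ p := by
          rw [pNorm_smul hp0.ne', abs_two, Real.mul_rpow zero_le_two (pNorm_nonneg _ _)]
      _ ≤ pNorm p (∑ i ∈ H, y i) ^ p + pNorm p (∑ i ∈ G, θ' i • y i) ^ p :=
          hdigit ▸ pNorm_add_rpow_le hp0 hp1 (.sum hp0 hp1 hy _) (.sum_smul hp0 hp1 hy _ _)
      _ ≤ D + pNorm p (∑ i ∈ G, θ' i • y i) ^ p := by
          gcongr
          exact hD H (Finset.filter_subset _ _)

lemma pNorm_sum_smul_rpow_le_of_forall_subset (hp0 : 0 < p) (hp1 : p ≤ 1) {y : ι → ℕ → ℝ}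
    (hy : ∀ i, MemLpSeq p (y i)) {G : Finset ι} {D : ℝ}
    (hD : ∀ H ⊆ G, pNorm p (∑ i ∈ H, y i) ^ p ≤ D) {θ : ι → ℝ} (hθ : ∀ i ∈ G, θ i ∈ Set.Icc 0 1) :
    pNorm p (∑ i ∈ G, θ i • y i) ^ p ≤ D / (2 ^ p - 1) := by
  have htwo : (1 : ℝ) < 2 ^ p := Real.one_lt_rpow one_lt_two hp0
  set S : Set ℝ := (fun θ : ι → ℝ => pNorm p (∑ i ∈ G, θ i • y i) ^ p) ''
    {θ | ∀ i ∈ G, θ i ∈ Set.Icc 0 1}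
  have hbdd : BddAbove S := by
    refine ⟨∑ i ∈ G, pNorm p (y i) ^ p, Set.forall_mem_image.2 fun θ hθ => ?_⟩
    refine (pNorm_sum_smul_rpow_le hp0 hp1 hy G θ).trans (Finset.sum_le_sum fun i hi => ?_)
    have habs : |θ i| ≤ 1 := (abs_of_nonneg (hθ i hi).1).trans_le (hθ i hi).2
    have hpos := pNorm_nonneg p (y i)
    exact Real.rpow_le_rpow (by positivity) (mul_le_of_le_one_left hpos habs) hp0.le
  have hmem : pNorm p (∑ i ∈ G, θ i • y i) ^ p ∈ S := ⟨θ, hθ, rfl⟩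
  -- Stripping a digit stays within `S` and gains the factor `2 ^ p > 1`, so the supremum `s` of `S`
  -- satisfies `2 ^ p * s ≤ D + s`; it is finite because `G` is.
  have hsup : sSup S ≤ (D + sSup S) / 2 ^ p := by
    refine csSup_le ⟨_, hmem⟩ (Set.forall_mem_image.2 fun θ hθ => ?_)
    obtain ⟨θ', hθ', h⟩ := exists_two_rpow_mul_pNorm_sum_smul_rpow_le hp0 hp1 hy hD hθ
    rw [le_div_iff₀' (by linarith)]
    exact h.trans (add_le_add_right (le_csSup hbdd ⟨θ', hθ', rfl⟩) D)
  refine (le_csSup hbdd hmem).trans ?_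
  rw [le_div_iff₀ (by linarith)] at hsup ⊢
  linarith

lemma rpow_mul_pNorm_sum_rpow_le (hp0 : 0 < p) (hp1 : p ≤ 1) {y : ι → ℕ → ℝ}
    (hy : ∀ i, MemLpSeq p (y i)) {G : Finset ι} {D : ℝ}
    (hD : ∀ H ⊆ G, pNorm p (∑ i ∈ H, y i) ^ p ≤ D) {a : ι → ℝ} {t η : ℝ} (ht : 0 ≤ t) (hη : 0 < η)
    (ha : ∀ i ∈ G, a i ∈ Set.Icc t (t + η)) :
    t ^ p * pNorm p (∑ i ∈ G, y i) ^ p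
      ≤ pNorm p (∑ i ∈ G, a i • y i) ^ p + η ^ p * (D / (2 ^ p - 1)) := by
  set θ : ι → ℝ := fun i => (a i - t) / η
  have hθ : ∀ i ∈ G, θ i ∈ Set.Icc 0 1 := fun i hi =>
    ⟨div_nonneg (sub_nonneg.2 (ha i hi).1) hη.le,
      (div_le_one hη).2 (sub_le_iff_le_add'.2 (ha i hi).2)⟩
  have hsplit : t • ∑ i ∈ G, y i = ∑ i ∈ G, a i • y i - η • ∑ i ∈ G, θ i • y i := by
    simp only [Finset.smul_sum, smul_smul, ← Finset.sum_sub_distrib, ← sub_smul, θ,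
      mul_div_cancel₀ _ hη.ne', sub_sub_cancel]
  have hmem (c : ι → ℝ) : MemLpSeq p (∑ i ∈ G, c i • y i) := .sum_smul hp0 hp1 hy G c
  calc t ^ p * pNorm p (∑ i ∈ G, y i) ^ p = pNorm p (t • ∑ i ∈ G, y i) ^ p := by
        rw [pNorm_smul hp0.ne', abs_of_nonneg ht, Real.mul_rpow ht (pNorm_nonneg _ _)]
    _ ≤ pNorm p (∑ i ∈ G, a i • y i) ^ p + pNorm p (η • ∑ i ∈ G, θ i • y i) ^ p :=
        hsplit ▸ pNorm_sub_rpow_le hp0 hp1 (hmem a) ((hmem θ).smul η)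
    _ = pNorm p (∑ i ∈ G, a i • y i) ^ p + η ^ p * pNorm p (∑ i ∈ G, θ i • y i) ^ p := by
        rw [pNorm_smul hp0.ne', abs_of_pos hη, Real.mul_rpow hη.le (pNorm_nonneg _ _)]
    _ ≤ pNorm p (∑ i ∈ G, a i • y i) ^ p + η ^ p * (D / (2 ^ p - 1)) := by
        gcongr
        exact pNorm_sum_smul_rpow_le_of_forall_subset hp0 hp1 hy hD hθ

lemma card_mul_rpow_le_of_forall_subset (hp0 : 0 < p) (hp1 : p ≤ 1) {y : ι → ℕ → ℝ}
    (hy : ∀ i, MemLpSeq p (y i)) {A : Finset ι} {D : ℝ}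
    (hD : ∀ B ⊆ A, pNorm p (∑ n ∈ B, y n) ^ p ≤ D) {δ : ℝ} (hδ : 0 ≤ δ) {J : Finset ℕ}
    (hJ : ∀ j ∈ J, ∃ n ∈ A, δ ≤ |y n j|) : J.card * δ ^ p ≤ 2 * D := by
  have hupper : ∑ B ∈ A.powerset, ∑ j ∈ J, |∑ n ∈ B, y n j| ^ p ≤ 2 ^ A.card * D := by
    have hcard : _ ≤ A.powerset.card • D := Finset.sum_le_card_nsmul _ _ _ fun B hB =>
      ((MemLpSeq.sum hp0 hp1 hy B).sum_rpow_le hp0.ne' J).trans (hD B (Finset.mem_powerset.1 hB))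
    simpa only [Finset.sum_apply, Finset.card_powerset, nsmul_eq_mul, Nat.cast_pow,
      Nat.cast_ofNat] using hcard
  have hlower : J.card * (2 ^ A.card * δ ^ p)
      ≤ 2 * ∑ B ∈ A.powerset, ∑ j ∈ J, |∑ n ∈ B, y n j| ^ p := by
    rw [Finset.sum_comm, Finset.mul_sum, ← nsmul_eq_mul]
    refine Finset.card_nsmul_le_sum _ _ _ fun j hj => ?_
    obtain ⟨n, hn, hδn⟩ := hJ j hj
    exact le_trans (by gcongr) (two_pow_card_mul_abs_rpow_le hp0.le hp1 (fun n => y n j) hn)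
  refine le_of_mul_le_mul_left ?_ (pow_pos (zero_lt_two' ℝ) A.card)
  linarith

end PNorm

section Basis

variable {p : ℝ} {x : ℕ → ℕ → ℝ} {xs : ℕ → (ℕ → ℝ) → ℝ}

namespace IsLpBasis

lemma coord_smul (hb : IsLpBasis p x xs) (n : ℕ) (c : ℝ) {f : ℕ → ℝ} (hf : MemLpSeq p f) :
    xs n (c • f) = c * xs n f :=
  hb.map_smul n c f hf

lemma coord_zero (hb : IsLpBasis p x xs) (hp : p ≠ 0) (n : ℕ) : xs n 0 = 0 := by
  simpa only [zero_smul, zero_mul] using hb.coord_smul n 0 (MemLpSeq.zero hp)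

lemma coord_sub (hb : IsLpBasis p x xs) (n : ℕ) {f g : ℕ → ℝ} (hf : MemLpSeq p f)
    (hg : MemLpSeq p g) : xs n (f - g) = xs n f - xs n g := by
  rw [sub_eq_add_neg, ← neg_one_smul ℝ g, hb.map_add n f _ hf (hg.smul (-1)),
    hb.coord_smul n (-1) hg, neg_one_mul, ← sub_eq_add_neg]

lemma coord_sum_smul (hb : IsLpBasis p x xs) (hp0 : 0 < p) (hp1 : p ≤ 1) (n : ℕ) {ι : Type*}
    {y : ι → ℕ → ℝ} (hy : ∀ i, MemLpSeq p (y i)) (s : Finset ι) (a : ι → ℝ) :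
    xs n (∑ i ∈ s, a i • y i) = ∑ i ∈ s, a i * xs n (y i) := by
  classical
  induction s using Finset.induction_on with
  | empty => simpa only [Finset.sum_empty] using hb.coord_zero hp0.ne' n
  | insert i s hi ih =>
    rw [Finset.sum_insert hi, Finset.sum_insert hi,
      hb.map_add n _ _ ((hy i).smul (a i)) (.sum_smul hp0 hp1 hy s a), hb.coord_smul n _ (hy i), ih]

lemma coord_sum_smul_basis (hb : IsLpBasis p x xs) (hp0 : 0 < p) (hp1 : p ≤ 1) (n : ℕ)
    (H : Finset ℕ) (c : ℕ → ℝ) : xs n (∑ k ∈ H, c k • x k) = if n ∈ H then c n else 0 := by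
  simp [hb.coord_sum_smul hp0 hp1 n hb.mem, hb.biorth]

lemma exists_bound (hb : IsLpBasis p x xs) : ∃ b > 0, (∀ n, pNorm p (x n) ≤ b) ∧
    ∀ n f, MemLpSeq p f → |xs n f| ≤ b * pNorm p f := by
  obtain ⟨b, hcoord⟩ := hb.bdd
  obtain ⟨R, hR⟩ := hb.norm_ub
  refine ⟨max 1 (max b R), by positivity, fun n => (hR n).trans (by simp), fun n f hf => ?_⟩
  exact (hcoord n f hf).trans (mul_le_mul_of_nonneg_right (by simp) (pNorm_nonneg p f))

lemma exists_entry_bound (hb : IsLpBasis p x xs) (hp : 0 < p) :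
    ∃ b > 0, ∀ n j, |x n j| ≤ b ∧ |xs n (Pi.single j 1)| ≤ b := by
  obtain ⟨b, hb0, hnorm, hbound⟩ := hb.exists_bound
  refine ⟨b, hb0, fun n j => ⟨((hb.mem n).abs_apply_le_pNorm hp j).trans (hnorm n), ?_⟩⟩
  simpa only [pNorm_single hp.ne', mul_one] using hbound n _ (memLpSeq_single hp.ne' j)

lemma finite_setOf_le_abs_coord (hb : IsLpBasis p x xs) (hp0 : 0 < p) (hp1 : p ≤ 1) {f : ℕ → ℝ}
    (hf : MemLpSeq p f) {t : ℝ} (ht : 0 < t) : {n | t ≤ |xs n f|}.Finite := by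
  obtain ⟨b, hb0, -, hbound⟩ := hb.exists_bound
  obtain ⟨A, c, hA⟩ := hb.dense f hf (t / b) (by positivity)
  refine A.finite_toSet.subset fun n hn => by_contra fun hnA => ?_
  have hsum : MemLpSeq p (∑ k ∈ A, c k • x k) := .sum_smul hp0 hp1 hb.mem A c
  have hcoord : xs n (f - ∑ k ∈ A, c k • x k) = xs n f := by
    rw [hb.coord_sub n hf hsum, hb.coord_sum_smul_basis hp0 hp1,
      if_neg (mt Finset.mem_coe.2 hnA), sub_zero]
  have happrox : pNorm p (f - ∑ k ∈ A, c k • x k) < t / b := by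
    convert hA using 2
    ext j
    simp
  refine absurd (show t ≤ |xs n f| from hn) (not_le.2 ?_)
  calc |xs n f| ≤ b * pNorm p (f - ∑ k ∈ A, c k • x k) :=
        hcoord ▸ hbound n _ (hf.sub hp0.le hp1 hsum)
    _ < t := (lt_div_iff₀' hb0).1 happrox

lemma hasSum_mul_coord_single (hb : IsLpBasis p x xs) (hp0 : 0 < p) (hp1 : p ≤ 1) (n : ℕ)
    {f : ℕ → ℝ} (hf : MemLpSeq p f) : HasSum (fun j => f j * xs n (Pi.single j 1)) (xs n f) := by
  obtain ⟨b, -, -, hbound⟩ := hb.exists_bound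
  have hpartial (J : Finset ℕ) : MemLpSeq p (∑ j ∈ J, f j • Pi.single j 1) :=
    .sum_smul hp0 hp1 (memLpSeq_single hp0.ne') J f
  have hdist (J : Finset ℕ) : ‖∑ j ∈ J, f j * xs n (Pi.single j 1) - xs n f‖
      ≤ b * pNorm p (f - ∑ j ∈ J, f j • Pi.single j 1) := by
    rw [← hb.coord_sum_smul hp0 hp1 n (memLpSeq_single hp0.ne'), norm_sub_rev, Real.norm_eq_abs,
      ← hb.coord_sub n hf (hpartial J)]
    exact hbound n _ (hf.sub hp0.le hp1 (hpartial J))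
  refine tendsto_iff_norm_sub_tendsto_zero.2 (squeeze_zero (fun _ => norm_nonneg _) hdist ?_)
  simpa only [mul_zero, SummationFilter.unconditional_filter] using
    (tendsto_pNorm_sub_sum_single hp0 f).const_mul b

lemma exists_le_mul_coord_single (hb : IsLpBasis p x xs) (hp0 : 0 < p) (hp1 : p < 1) :
    ∃ δ > 0, ∀ n, ∃ j, δ ≤ x n j * xs n (Pi.single j 1) := by
  obtain ⟨b, hb0, hnorm, hbound⟩ := hb.exists_bound
  set δ : ℝ := (1 / (2 * (b ^ p * b ^ p))) ^ (1 - p)⁻¹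
  have hδp : δ ^ (1 - p) = 1 / (2 * (b ^ p * b ^ p)) :=
    Real.rpow_inv_rpow (by positivity) (sub_pos.2 hp1).ne'
  -- `δ` is chosen so that `∑ j, x n j * xs n (Pi.single j 1) = 1` would be at most `1 / 2` if all
  -- its terms were below `δ`.
  refine ⟨δ, by positivity, fun n => by_contra fun hsmall => ?_⟩
  push Not at hsmall
  have hterm (j : ℕ) : x n j * xs n (Pi.single j 1) ≤ δ ^ (1 - p) * b ^ p * |x n j| ^ p := by
    have hcoord := hbound n _ (memLpSeq_single hp0.ne' j)
    rw [pNorm_single hp0.ne', mul_one] at hcoord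
    have hle : x n j * xs n (Pi.single j 1) ≤ b * |x n j| :=
      (le_abs_self _).trans (by rw [abs_mul, mul_comm]; gcongr)
    simpa only [Real.mul_rpow hb0.le (abs_nonneg _), mul_assoc] using
      le_rpow_one_sub_mul_rpow hp0.le hp1.le (by positivity) (by positivity) (hsmall j).le hle
  have hsum := hasSum_le hterm (hb.hasSum_mul_coord_single hp0 hp1.le n (hb.mem n))
    ((hb.mem n).hasSum.mul_left _)
  rw [hb.biorth, if_pos rfl, ← pNorm_rpow hp0.ne', hδp] at hsum
  have hhalf : 1 / (2 * (b ^ p * b ^ p)) * b ^ p * pNorm p (x n) ^ p ≤ 1 / 2 := by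
    calc _ ≤ 1 / (2 * (b ^ p * b ^ p)) * b ^ p * b ^ p := by
          gcongr
          exacts [pNorm_nonneg _ _, hnorm n]
      _ = 1 / 2 := by field_simp
  linarith

end IsLpBasis

/-- Quasi-greediness with constant `C`. Unlike in `QuasiGreedy`, projections are sums in the
function space `ℕ → ℝ`, so that the algebra of `Finset.sum` and `•` applies to them directly. -/
def QuasiGreedyWith (C p : ℝ) (x : ℕ → ℕ → ℝ) (xs : ℕ → (ℕ → ℝ) → ℝ) : Prop :=
  ∀ f, MemLpSeq p f → ∀ A : Finset ℕ, GreedySet (fun n => xs n f) A →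
    pNorm p (∑ n ∈ A, xs n f • x n) ≤ C * pNorm p f

lemma QuasiGreedy.exists_quasiGreedyWith (h : QuasiGreedy p x xs) :
    ∃ C > 0, QuasiGreedyWith C p x xs := by
  obtain ⟨C, hC1, hC⟩ := h
  refine ⟨C, by positivity, fun f hf A hA => ?_⟩
  convert hC f hf A hA using 2
  ext j
  simp

namespace QuasiGreedyWith

variable {C : ℝ}

lemma pNorm_sum_smul_le_of_subset (hC : QuasiGreedyWith C p x xs) (hb : IsLpBasis p x xs)
    (hp0 : 0 < p) (hp1 : p ≤ 1) {ε : ℕ → ℝ} {G H : Finset ℕ} (hε : ∀ n ∈ G, |ε n| = 1)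
    (hHG : H ⊆ G) : pNorm p (∑ n ∈ H, ε n • x n) ≤ C * pNorm p (∑ n ∈ G, ε n • x n) := by
  have hgreedy : GreedySet (fun n => xs n (∑ k ∈ G, ε k • x k)) H := by
    intro n hn k _
    simp only [hb.coord_sum_smul_basis hp0 hp1, if_pos (hHG hn), hε n (hHG hn)]
    split_ifs with hk
    · exact (hε k hk).le
    · simp
  have hproj : ∑ n ∈ H, xs n (∑ k ∈ G, ε k • x k) • x n = ∑ n ∈ H, ε n • x n :=
    Finset.sum_congr rfl fun n hn => by
      rw [hb.coord_sum_smul_basis hp0 hp1, if_pos (hHG hn)]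
  exact hproj ▸ hC _ (.sum_smul hp0 hp1 hb.mem G ε) H hgreedy

lemma pNorm_sum_coord_smul_slice_rpow_le (hC : QuasiGreedyWith C p x xs) (hC0 : 0 ≤ C)
    (hb : IsLpBasis p x xs) (hp0 : 0 < p) (hp1 : p ≤ 1) {f : ℕ → ℝ} (hf : MemLpSeq p f) {t u : ℝ}
    (ht : 0 < t) (htu : t ≤ u) {G : Finset ℕ} (hG : ∀ n, n ∈ G ↔ t ≤ |xs n f| ∧ |xs n f| < u) :
    pNorm p (∑ n ∈ G, xs n f • x n) ^ p ≤ 2 * C ^ p * pNorm p f ^ p := by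
  classical
  have hlevel {r : ℝ} (hr : 0 < r) : ∃ L : Finset ℕ, (∀ n, n ∈ L ↔ r ≤ |xs n f|) ∧
      pNorm p (∑ n ∈ L, xs n f • x n) ^ p ≤ C ^ p * pNorm p f ^ p := by
    set L := (hb.finite_setOf_le_abs_coord hp0 hp1 hf hr).toFinset
    have hL (n : ℕ) : n ∈ L ↔ r ≤ |xs n f| := Set.Finite.mem_toFinset _
    refine ⟨L, hL, ?_⟩
    rw [← Real.mul_rpow hC0 (pNorm_nonneg p f)]
    exact Real.rpow_le_rpow (pNorm_nonneg _ _) (hC f hf L fun n hn k hk =>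
      (not_le.1 (mt (hL k).2 hk)).le.trans ((hL n).1 hn)) hp0.le
  obtain ⟨T, hT, hTnorm⟩ := hlevel ht
  obtain ⟨U, hU, hUnorm⟩ := hlevel (ht.trans_le htu)
  have hGTU : G = T \ U := by
    ext n
    rw [Finset.mem_sdiff, hG, hT, hU, not_le]
  have hUT : U ⊆ T := fun n hn => (hT n).2 (htu.trans ((hU n).1 hn))
  rw [hGTU, Finset.sum_sdiff_eq_sub hUT]
  refine (pNorm_sub_rpow_le hp0 hp1 (.sum_smul hp0 hp1 hb.mem T _)
    (.sum_smul hp0 hp1 hb.mem U _)).trans ?_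
  linarith

lemma pNorm_sum_sign_smul_slice_rpow_le (hC : QuasiGreedyWith C p x xs) (hC0 : 0 ≤ C)
    (hb : IsLpBasis p x xs) (hp0 : 0 < p) (hp1 : p ≤ 1) {f : ℕ → ℝ} (hf : MemLpSeq p f) {t η : ℝ}
    (ht : 0 < t) (hη : 0 < η) (hηt : η ^ p * (C ^ p / (2 ^ p - 1)) ≤ t ^ p / 2) {G : Finset ℕ}
    (hG : ∀ n, n ∈ G ↔ t ≤ |xs n f| ∧ |xs n f| < t + η) :
    t ^ p * pNorm p (∑ n ∈ G, (SignType.sign (xs n f) : ℝ) • x n) ^ p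
      ≤ 4 * C ^ p * pNorm p f ^ p := by
  set ε : ℕ → ℝ := fun n => SignType.sign (xs n f)
  set Z := pNorm p (∑ n ∈ G, ε n • x n) ^ p
  have hZ : 0 ≤ Z := Real.rpow_nonneg (pNorm_nonneg _ _) p
  have hε : ∀ n ∈ G, |ε n| = 1 := fun n hn =>
    abs_coe_sign (abs_pos.1 (ht.trans_le ((hG n).1 hn).1))
  have hsub : ∀ H ⊆ G, pNorm p (∑ n ∈ H, ε n • x n) ^ p ≤ C ^ p * Z := fun H hH =>
    (Real.rpow_le_rpow (pNorm_nonneg _ _) (hC.pNorm_sum_smul_le_of_subset hb hp0 hp1 hε hH)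
      hp0.le).trans_eq (Real.mul_rpow hC0 (pNorm_nonneg _ _))
  have hflat := rpow_mul_pNorm_sum_rpow_le hp0 hp1 (fun n => (hb.mem n).smul (ε n)) hsub ht.le hη
    (a := fun n => |xs n f|) fun n hn => ⟨((hG n).1 hn).1, ((hG n).1 hn).2.le⟩
  simp only [smul_smul, ε, abs_mul_sign] at hflat
  have hslice := hC.pNorm_sum_coord_smul_slice_rpow_le hC0 hb hp0 hp1 hf ht
    (le_add_of_nonneg_right hη.le) hG
  have habsorb : η ^ p * (C ^ p * Z / (2 ^ p - 1)) ≤ t ^ p / 2 * Z := by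
    calc η ^ p * (C ^ p * Z / (2 ^ p - 1)) = η ^ p * (C ^ p / (2 ^ p - 1)) * Z := by ring
      _ ≤ t ^ p / 2 * Z := by gcongr
  linarith

lemma exists_pNorm_sum_sign_smul_le (hC : QuasiGreedyWith C p x xs) (hC0 : 0 < C)
    (hb : IsLpBasis p x xs) (hp0 : 0 < p) (hp1 : p ≤ 1) {δ : ℝ} (hδ : 0 < δ) :
    ∃ η > 0, ∃ M, ∀ f, MemLpSeq p f → ∀ t ≥ δ, ∀ B : Finset ℕ,
      (∀ n ∈ B, t ≤ |xs n f| ∧ |xs n f| < t + η) →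
        pNorm p (∑ n ∈ B, (SignType.sign (xs n f) : ℝ) • x n) ≤ M * pNorm p f := by
  have htwo : (0 : ℝ) < 2 ^ p - 1 := sub_pos.2 (Real.one_lt_rpow one_lt_two hp0)
  set η : ℝ := (δ ^ p / 2 / (C ^ p / (2 ^ p - 1))) ^ p⁻¹
  have hη : η ^ p * (C ^ p / (2 ^ p - 1)) = δ ^ p / 2 := by
    rw [Real.rpow_inv_rpow (by positivity) hp0.ne', div_mul_cancel₀ _ (by positivity)]
  refine ⟨η, by positivity, C * (4 * C ^ p / δ ^ p) ^ p⁻¹, fun f hf t ht B hB => ?_⟩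
  have ht0 : 0 < t := hδ.trans_le ht
  set G := ((hb.finite_setOf_le_abs_coord hp0 hp1 hf ht0).subset
    (Set.sep_subset _ fun n => |xs n f| < t + η)).toFinset
  have hG (n : ℕ) : n ∈ G ↔ t ≤ |xs n f| ∧ |xs n f| < t + η := Set.Finite.mem_toFinset _
  have hδt : δ ^ p ≤ t ^ p := Real.rpow_le_rpow hδ.le ht hp0.le
  have hG0 := pNorm_nonneg p (∑ n ∈ G, (SignType.sign (xs n f) : ℝ) • x n)
  have hslice := hC.pNorm_sum_sign_smul_slice_rpow_le hC0.le hb hp0 hp1 hf ht0 (by positivity)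
    (hη.trans_le (by gcongr)) hG
  have hfull : pNorm p (∑ n ∈ G, (SignType.sign (xs n f) : ℝ) • x n)
      ≤ (4 * C ^ p / δ ^ p) ^ p⁻¹ * pNorm p f := by
    refine le_rpow_inv_mul_of_rpow_le hp0 hG0 (pNorm_nonneg _ _) (by positivity) ?_
    rw [div_mul_eq_mul_div, le_div_iff₀' (by positivity)]
    exact le_trans (by gcongr) hslice
  rw [mul_assoc]
  refine (hC.pNorm_sum_smul_le_of_subset hb hp0 hp1 (fun n hn => ?_) fun n hn =>
    (hG n).2 (hB n hn)).trans (by gcongr)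
  exact abs_coe_sign (abs_pos.1 (ht0.trans_le ((hG n).1 hn).1))

lemma exists_card_le_of_le_mul_coord_single (hC : QuasiGreedyWith C p x xs) (hC0 : 0 < C)
    (hb : IsLpBasis p x xs) (hp0 : 0 < p) (hp1 : p ≤ 1) {δ : ℝ} (hδ : 0 < δ) :
    ∃ K : ℕ, ∀ j, ∀ A : Finset ℕ,
      (∀ n ∈ A, δ ≤ x n j * xs n (Pi.single j 1)) → A.card ≤ K := by
  obtain ⟨b, hb0, hbound⟩ := hb.exists_entry_bound hp0
  obtain ⟨η, hη, M, hM⟩ :=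
    hC.exists_pNorm_sum_sign_smul_le hC0 hb hp0 hp1 (div_pos hδ hb0)
  refine ⟨⌊M / (δ / b)⌋₊ * (⌊(b - δ / b) / η⌋₊ + 1), fun j A hA => ?_⟩
  refine card_le_of_forall_card_slice_le hη (g := fun n => |xs n (Pi.single j 1)|)
    (fun n hn => ⟨?_, (hbound n j).2⟩) fun t ht B hBA hB => Nat.le_floor ?_
  · exact div_le_abs_of_le_mul hb0 ((hA n hn).trans_eq (mul_comm _ _)) (hbound n j).1
  · rw [le_div_iff₀ (by positivity)]
    have hterm : ∀ n ∈ B, δ / b ≤ (SignType.sign (xs n (Pi.single j 1)) : ℝ) * x n j :=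
      fun n hn => div_le_sign_mul_of_le_mul hb0 hδ (hA n (hBA hn)) (hbound n j).2
    calc (B.card : ℝ) * (δ / b)
        ≤ ∑ n ∈ B, (SignType.sign (xs n (Pi.single j 1)) : ℝ) * x n j := by
          simpa only [nsmul_eq_mul] using Finset.card_nsmul_le_sum B _ _ hterm
      _ = (∑ n ∈ B, (SignType.sign (xs n (Pi.single j 1)) : ℝ) • x n) j := by
          simp only [Finset.sum_apply, Pi.smul_apply, smul_eq_mul]
      _ ≤ pNorm p (∑ n ∈ B, (SignType.sign (xs n (Pi.single j 1)) : ℝ) • x n) :=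
          (le_abs_self _).trans
            ((MemLpSeq.sum_smul hp0 hp1 hb.mem B _).abs_apply_le_pNorm hp0 j)
      _ ≤ M := by
          simpa only [pNorm_single hp0.ne', mul_one] using
            hM _ (memLpSeq_single hp0.ne' j) t ht B hB

lemma exists_card_le_mul_pNorm_sum_rpow (hC : QuasiGreedyWith C p x xs) (hC0 : 0 < C)
    (hb : IsLpBasis p x xs) (hp0 : 0 < p) (hp1 : p < 1) :
    ∃ K > 0, ∀ A : Finset ℕ, (A.card : ℝ) ≤ K * pNorm p (∑ n ∈ A, x n) ^ p := by
  obtain ⟨δ, hδ, hlink⟩ := hb.exists_le_mul_coord_single hp0 hp1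
  choose J hJ using hlink
  obtain ⟨k, hk⟩ := hC.exists_card_le_of_le_mul_coord_single hC0 hb hp0 hp1.le hδ
  obtain ⟨b, hb0, hbound⟩ := hb.exists_entry_bound hp0
  refine ⟨(k + 1) * (2 * C ^ p / (δ / b) ^ p), by positivity, fun A => ?_⟩
  have hfibre : (A.card : ℝ) ≤ (k + 1) * (A.image J).card := by
    have hcard : A.card ≤ k * (A.image J).card :=
      Finset.card_le_mul_card_image A k fun j _ => hk j _ fun n hn =>
        (Finset.mem_filter.1 hn).2 ▸ hJ n
    exact_mod_cast hcard.trans (Nat.mul_le_mul_right _ k.le_succ)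
  have hsub : ∀ B ⊆ A, pNorm p (∑ n ∈ B, x n) ^ p ≤ C ^ p * pNorm p (∑ n ∈ A, x n) ^ p := by
    intro B hBA
    rw [← Real.mul_rpow hC0.le (pNorm_nonneg _ _)]
    refine Real.rpow_le_rpow (pNorm_nonneg _ _) ?_ hp0.le
    simpa only [one_smul] using
      hC.pNorm_sum_smul_le_of_subset hb hp0 hp1.le (ε := fun _ => 1) (fun _ _ => abs_one) hBA
  have hentry : ∀ j ∈ A.image J, ∃ n ∈ A, δ / b ≤ |x n j| :=
    Finset.forall_mem_image.2 fun n hn => ⟨n, hn, div_le_abs_of_le_mul hb0 (hJ n) (hbound n _).2⟩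
  have himage := card_mul_rpow_le_of_forall_subset hp0 hp1.le hb.mem hsub (by positivity) hentry
  calc (A.card : ℝ) ≤ (k + 1) * (A.image J).card := hfibre
    _ ≤ (k + 1) * (2 * (C ^ p * pNorm p (∑ n ∈ A, x n) ^ p) / (δ / b) ^ p) := by
        gcongr
        rwa [le_div_iff₀ (by positivity)]
    _ = (k + 1) * (2 * C ^ p / (δ / b) ^ p) * pNorm p (∑ n ∈ A, x n) ^ p := by ring

end QuasiGreedyWith

end Basis

theorem stmt4_general {p : ℝ} (hp0 : 0 < p) (hp1 : p < 1) {x : ℕ → ℕ → ℝ}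
    {xs : ℕ → (ℕ → ℝ) → ℝ} (hbasis : IsLpBasis p x xs) (hqg : QuasiGreedy p x xs) :
    ∃ c : ℝ, 0 < c ∧ ∀ A : Finset ℕ,
      c * (A.card : ℝ) ^ (1 / p) ≤ pNorm p (fun j => ∑ n ∈ A, x n j) := by
  obtain ⟨C, hC0, hC⟩ := hqg.exists_quasiGreedyWith
  obtain ⟨K, hK0, hK⟩ := hC.exists_card_le_mul_pNorm_sum_rpow hC0 hbasis hp0 hp1
  refine ⟨(K ^ p⁻¹)⁻¹, by positivity, fun A => ?_⟩
  rw [inv_mul_le_iff₀ (by positivity), one_div, ← Finset.sum_fn]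
  refine le_rpow_inv_mul_of_rpow_le hp0 (by positivity) (pNorm_nonneg _ _) hK0.le ?_
  exact (Real.rpow_inv_rpow A.card.cast_nonneg hp0.ne').trans_le (hK A)

/-- Intermediate estimate in the proof of the main theorem: for a quasi-greedy
basis of `ℓ_p`, `0<p<1`, with `q = (1-p+p²)/(p²-p³)` one has
`φ_l(m) ≥ c·m^(1/p)/(1+log m)^q`. -/
theorem stmt4 (p : ℝ) (hp0 : 0 < p) (hp1 : p < 1)
    (x : ℕ → ℕ → ℝ) (xs : ℕ → (ℕ → ℝ) → ℝ)
    (hbasis : IsLpBasis p x xs) (hqg : QuasiGreedy p x xs) :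
    ∃ c : ℝ, 0 < c ∧ ∀ m : ℕ, 1 ≤ m → ∀ A : Finset ℕ, m ≤ A.card →
      c * (m : ℝ) ^ (1 / p) / (1 + Real.log m) ^ ((1 - p + p ^ 2) / (p ^ 2 - p ^ 3))
        ≤ pNorm p (fun j => ∑ n ∈ A, x n j) := by
  obtain ⟨c, hc, h⟩ := stmt4_general hp0 hp1 hbasis hqg
  have hq : 0 ≤ (1 - p + p ^ 2) / (p ^ 2 - p ^ 3) :=
    div_nonneg (by nlinarith) (sub_nonneg.2 (pow_le_pow_of_le_one hp0.le hp1.le (by norm_num)))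
  exact ⟨c, hc, fun m hm A hA => (div_le_self (by positivity)
    (one_le_one_add_log_rpow (Nat.one_le_cast.2 hm) hq)).trans (le_trans (by gcongr) (h A))⟩
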